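/- Let α, β, γ be real numbers and n ≥ 3 an integer. Then the set of values of the permanent on Λ̂_n(α,β,γ) equals the set of all products a(α,β,γ;n_1)·a(α,β,γ;n_2)⋯a(α,β,γ;n_m), where {n_1,…,n_m} ranges over all partitions of n with parts ≥ 3. -/

import Mathlib

open Matrix

/-- `Λ̂_n(α,β,γ)`: matrices `α·Sᵀ + β·I + γ·S` where `S` is the permutation matrix of a
permutation of `{1,…,n}` all of whose cycles have length at least 3 (note `Sᵀ = S⁻¹`). -/
def LambdaHat (n : ℕ) (α β γ : ℝ) : Set (Matrix (Fin n) (Fin n) ℝ) :=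
  {A | ∃ s : Equiv.Perm (Fin n), (∀ x, s x ≠ x ∧ s (s x) ≠ x) ∧
    A = α • ((s⁻¹).permMatrix ℝ) + β • (1 : Matrix (Fin n) (Fin n) ℝ) + γ • (s.permMatrix ℝ)}

namespace Matrix

variable {R : Type*} [CommSemiring R]

theorem permanent_submatrix_equiv_self {m n : Type*} [DecidableEq m] [Fintype m] [DecidableEq n]
    [Fintype n] (e : n ≃ m) (A : Matrix m m R) :
    (A.submatrix e e).permanent = A.permanent := by
  refine Fintype.sum_equiv e.permCongr _ _ fun σ => ?_
  exact Fintype.prod_equiv e _ _ fun i => by simp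

theorem permanent_fromBlocks_zero_zero {m n : Type*} [DecidableEq m] [Fintype m] [DecidableEq n]
    [Fintype n] (A : Matrix m m R) (D : Matrix n n R) :
    (fromBlocks A 0 0 D).permanent = A.permanent * D.permanent := by
  have hinj := Equiv.Perm.sumCongrHom_injective (α := m) (β := n)
  simp only [permanent]
  rw [Finset.sum_mul_sum, ← Finset.sum_product', Finset.univ_product_univ]
  symm
  refine Finset.sum_of_injOn (fun σ => Equiv.Perm.sumCongrHom m n σ) hinj.injOn (by simp) ?_ ?_
  · intro σ _ hσ
    obtain ⟨a, ha⟩ : ∃ a, ∀ y, Sum.inl y ≠ σ (Sum.inl a) := by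
      by_contra! h
      obtain ⟨τ, rfl⟩ := Equiv.Perm.mem_sumCongrHom_range_of_perm_mapsTo_inl (σ := σ) (by
        rintro _ ⟨a, rfl⟩
        exact h a)
      exact hσ ⟨τ, by simp, rfl⟩
    refine Finset.prod_eq_zero (Finset.mem_univ (Sum.inl a)) ?_
    rcases hx : σ (Sum.inl a) with y | y
    · exact absurd hx.symm (ha y)
    · rfl
  · rintro ⟨σ, τ⟩ _
    simp [Fintype.prod_sum_type]

theorem permanent_succ_column_zero {n : ℕ} (A : Matrix (Fin (n + 1)) (Fin (n + 1)) R) :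
    A.permanent = ∑ i, A i 0 * (A.submatrix i.succAbove Fin.succ).permanent := by
  rw [permanent, Finset.univ_perm_fin_succ, ← Finset.univ_product_univ, Finset.sum_map,
    Finset.sum_product]
  refine Finset.sum_congr rfl fun i _ => ?_
  simp only [Equiv.toEmbedding_apply, Fin.prod_univ_succ,
    Equiv.Perm.decomposeFin_symm_apply_zero, Equiv.Perm.decomposeFin_symm_apply_succ,
    ← Finset.mul_sum]
  congr 1
  cases i using Fin.cases with
  | zero => simp [permanent]
  | succ i =>
    rw [← permanent_permute_cols i.cycleRange]
    simp [permanent, Fin.succAbove_cycleRange]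

theorem permanent_succ_row_zero {n : ℕ} (A : Matrix (Fin (n + 1)) (Fin (n + 1)) R) :
    A.permanent = ∑ j, A 0 j * (A.submatrix Fin.succ j.succAbove).permanent := by
  rw [← permanent_transpose, permanent_succ_column_zero]
  refine Finset.sum_congr rfl fun i _ => ?_
  rw [← permanent_transpose]
  rfl

theorem permanent_of_lower_triangular {n : ℕ} (A : Matrix (Fin n) (Fin n) R)
    (h : ∀ i j, i < j → A i j = 0) : A.permanent = ∏ i, A i i := by
  induction n with
  | zero => simp [permanent_isEmpty]
  | succ n ih =>
    rw [permanent_succ_row_zero, Fin.sum_univ_succ, Fin.prod_univ_succ,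
      Finset.sum_eq_zero fun j _ => by rw [h 0 j.succ j.succ_pos, zero_mul], add_zero,
      ih (A.submatrix Fin.succ (Fin.succAbove 0)) fun i j hij => h _ _ (by simpa using hij)]
    simp

theorem permanent_of_upper_triangular {n : ℕ} (A : Matrix (Fin n) (Fin n) R)
    (h : ∀ i j, j < i → A i j = 0) : A.permanent = ∏ i, A i i := by
  rw [← permanent_transpose, permanent_of_lower_triangular Aᵀ fun i j hij => h j i hij]
  rfl

/-- The `n × n` Toeplitz matrix with subdiagonal `α`, diagonal `β` and superdiagonal `γ`. -/
def tridiagonal (α β γ : R) (n : ℕ) : Matrix (Fin n) (Fin n) R :=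
  of fun i j => if (i : ℕ) = j + 1 then α else if (i : ℕ) = j then β
    else if (j : ℕ) = i + 1 then γ else 0

theorem permanent_tridiagonal_zero (α β γ : R) : (tridiagonal α β γ 0).permanent = 1 :=
  permanent_isEmpty

theorem permanent_tridiagonal_one (α β γ : R) : (tridiagonal α β γ 1).permanent = β := by
  simp [tridiagonal]

theorem permanent_tridiagonal_add_two (α β γ : R) (n : ℕ) :
    (tridiagonal α β γ (n + 2)).permanent =
      β * (tridiagonal α β γ (n + 1)).permanent + α * γ * (tridiagonal α β γ n).permanent := by
  have h₀ : (tridiagonal α β γ (n + 2)).submatrix Fin.succ Fin.succ =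
      tridiagonal α β γ (n + 1) := by
    ext i j; simp [tridiagonal]
  have h₁ : (((tridiagonal α β γ (n + 2)).submatrix Fin.succ (Fin.succAbove (Fin.succ 0)))).submatrix
      Fin.succ Fin.succ = tridiagonal α β γ n := by
    ext i j; simp [tridiagonal, Fin.succAbove, Fin.lt_def]
  rw [permanent_succ_row_zero, Fin.sum_univ_succ, Fin.sum_univ_succ,
    Finset.sum_eq_zero fun j _ => by simp [tridiagonal], Fin.succAbove_zero, h₀,
    permanent_succ_column_zero (submatrix _ _ _), Fin.sum_univ_succ,
    Finset.sum_eq_zero fun j _ => by simp [tridiagonal], Fin.succAbove_zero, h₁]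
  simp [tridiagonal]
  ring

/-- The `(m + 3) × (m + 3)` circulant matrix obtained from `tridiagonal` by adding the two
corner entries. -/
def circulantTridiagonal (α β γ : R) (m : ℕ) : Matrix (Fin (m + 3)) (Fin (m + 3)) R :=
  of fun i j => if (i : ℕ) = j + 1 ∨ (i : ℕ) = 0 ∧ (j : ℕ) = m + 2 then α
    else if (i : ℕ) = j then β
    else if (j : ℕ) = i + 1 ∨ (i : ℕ) = m + 2 ∧ (j : ℕ) = 0 then γ else 0

theorem permanent_circulantTridiagonal_minor_one (α β γ : R) (m : ℕ) :
    ((circulantTridiagonal α β γ m).submatrix Fin.succ (Fin.succAbove (Fin.succ 0))).permanent =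
      α * (tridiagonal α β γ (m + 1)).permanent + γ ^ (m + 2) := by
  set A := (circulantTridiagonal α β γ m).submatrix Fin.succ (Fin.succAbove (Fin.succ 0)) with hA
  have h₀ : A.submatrix Fin.succ Fin.succ = tridiagonal α β γ (m + 1) := by
    ext i j
    have := i.2; have := j.2
    simp [hA, circulantTridiagonal, tridiagonal, Fin.succAbove, Fin.lt_def]
  have h₁ : (A.submatrix Fin.castSucc Fin.succ).permanent = γ ^ (m + 1) := by
    rw [permanent_of_lower_triangular]
    · simp [hA, circulantTridiagonal, Fin.succAbove, Fin.lt_def]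
    · intro i j hij
      have := i.2; have := j.2
      rw [Fin.lt_def] at hij
      simp [hA, circulantTridiagonal, Fin.succAbove, Fin.lt_def]
      grind
  have hl : Fin.succAbove (Fin.last m).succ = Fin.castSucc := by
    rw [Fin.succ_last, Fin.succAbove_last]
  have hz : ∀ i : Fin m, A i.castSucc.succ 0 = 0 := fun i => by
    have := i.2
    simp [hA, circulantTridiagonal, Fin.succAbove]
    grind
  rw [permanent_succ_column_zero, Fin.sum_univ_succ, Fin.sum_univ_castSucc,
    Finset.sum_eq_zero fun i _ => by rw [hz, zero_mul], hl, h₁, Fin.succAbove_zero, h₀]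
  simp [hA, circulantTridiagonal]
  ring

theorem permanent_circulantTridiagonal_minor_last (α β γ : R) (m : ℕ) :
    ((circulantTridiagonal α β γ m).submatrix Fin.succ Fin.castSucc).permanent =
      γ * (tridiagonal α β γ (m + 1)).permanent + α ^ (m + 2) := by
  set A := (circulantTridiagonal α β γ m).submatrix Fin.succ Fin.castSucc with hA
  have h₀ : A.submatrix Fin.castSucc Fin.succ = tridiagonal α β γ (m + 1) := by
    ext i j
    have := i.2; have := j.2
    simp [hA, circulantTridiagonal, tridiagonal]
  have h₁ : (A.submatrix Fin.succ Fin.succ).permanent = α ^ (m + 1) := by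
    rw [permanent_of_upper_triangular]
    · simp [hA, circulantTridiagonal]
    · intro i j hij
      have := i.2; have := j.2
      rw [Fin.lt_def] at hij
      simp [hA, circulantTridiagonal]
      grind
  have hl : Fin.succAbove (Fin.last m).succ = Fin.castSucc := by
    rw [Fin.succ_last, Fin.succAbove_last]
  have hz : ∀ i : Fin m, A i.castSucc.succ 0 = 0 := fun i => by
    have := i.2
    simp [hA, circulantTridiagonal]
    grind
  rw [permanent_succ_column_zero, Fin.sum_univ_succ, Fin.sum_univ_castSucc,
    Finset.sum_eq_zero fun i _ => by rw [hz, zero_mul], hl, h₀, Fin.succAbove_zero, h₁]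
  simp [hA, circulantTridiagonal]
  ring

theorem permanent_circulantTridiagonal (α β γ : R) (m : ℕ) :
    (circulantTridiagonal α β γ m).permanent =
      β * (tridiagonal α β γ (m + 2)).permanent +
        2 * α * γ * (tridiagonal α β γ (m + 1)).permanent + α ^ (m + 3) + γ ^ (m + 3) := by
  have h₀ : (circulantTridiagonal α β γ m).submatrix Fin.succ Fin.succ =
      tridiagonal α β γ (m + 2) := by
    ext i j
    have := i.2; have := j.2
    simp [circulantTridiagonal, tridiagonal]
  have hl : Fin.succAbove (Fin.last m).succ.succ = Fin.castSucc := by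
    rw [Fin.succ_last, Fin.succ_last, Fin.succAbove_last]
  have hz : ∀ i : Fin m, circulantTridiagonal α β γ m 0 i.castSucc.succ.succ = 0 := fun i => by
    have := i.2
    simp [circulantTridiagonal]
    grind
  rw [permanent_succ_row_zero, Fin.sum_univ_succ, Fin.sum_univ_succ, Fin.sum_univ_castSucc,
    Finset.sum_eq_zero fun i _ => by rw [hz, zero_mul], hl, Fin.succAbove_zero, h₀,
    permanent_circulantTridiagonal_minor_one, permanent_circulantTridiagonal_minor_last]
  simp [circulantTridiagonal]
  ring
end Matrix

namespace Equiv.Perm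

theorem cycleType_permCongr {ι κ : Type*} [Fintype ι] [DecidableEq ι] [Fintype κ] [DecidableEq κ]
    (e : ι ≃ κ) (s : Perm ι) : (e.permCongr s).cycleType = s.cycleType := by
  rw [← cycleType_extendDomain (e.trans (Equiv.Set.univ κ).symm) (g := s)]
  congr 1

theorem cycleType_sumCongr {ι κ : Type*} [Fintype ι] [DecidableEq ι] [Fintype κ] [DecidableEq κ]
    (s : Perm ι) (t : Perm κ) : (sumCongr s t).cycleType = s.cycleType + t.cycleType := by
  have hs : sumCongr s (1 : Perm κ) = s.viaFintypeEmbedding Function.Embedding.inl := by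
    ext (x | x)
    · exact (viaFintypeEmbedding_apply_image s Function.Embedding.inl x).symm
    · exact (viaFintypeEmbedding_apply_notMem_range s Function.Embedding.inl (by simp)).symm
  have ht : sumCongr (1 : Perm ι) t = t.viaFintypeEmbedding Function.Embedding.inr := by
    ext (x | x)
    · exact (viaFintypeEmbedding_apply_notMem_range t Function.Embedding.inr (by simp)).symm
    · exact (viaFintypeEmbedding_apply_image t Function.Embedding.inr x).symm
  have hd : (sumCongr s (1 : Perm κ)).Disjoint (sumCongr (1 : Perm ι) t) := by
    rintro (x | x) <;> simp
  rw [← mul_one s, ← one_mul t, ← sumCongr_mul, hd.cycleType_mul, hs, ht, mul_one, one_mul]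
  simp [viaFintypeEmbedding]

theorem three_le_of_mem_cycleType {ι : Type*} [Fintype ι] [DecidableEq ι] {s : Perm ι}
    (h : ∀ x, s x ≠ x → s (s x) ≠ x) {p : ℕ} (hp : p ∈ s.cycleType) : 3 ≤ p := by
  refine lt_of_le_of_ne (two_le_of_mem_cycleType hp) fun h2 => ?_
  obtain ⟨c, τ, rfl, hd, hc, rfl⟩ := mem_cycleType_iff.1 hp
  obtain ⟨x, hx, -⟩ := id hc
  have hτ : ∀ y, c y ≠ y → τ y = y := fun y hy => (hd y).resolve_left hy
  have hx' : c (c x) ≠ c x := fun h => hx (c.injective h)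
  have hcc : c (c x) = x := by
    have : c ^ 2 = 1 := by rw [h2, ← hc.orderOf, pow_orderOf_eq_one]
    simpa [sq] using DFunLike.congr_fun this x
  have := h x
  simp only [mul_apply, hτ x hx, hτ _ hx', hcc] at this
  exact this hx rfl

theorem sum_cycleType_of_forall_ne {ι : Type*} [Fintype ι] [DecidableEq ι] {s : Perm ι}
    (h : ∀ x, s x ≠ x) : s.cycleType.sum = Fintype.card ι := by
  rw [sum_cycleType, ← Finset.card_univ]
  congr 1
  ext x
  simp [h]

end Equiv.Perm

open Equiv

/-- The matrix `α·Sᵀ + β·I + γ·S`, where `S` is the permutation matrix of `s`. -/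
def cyclicBandMatrix {ι : Type*} [DecidableEq ι] (α β γ : ℝ) (s : Perm ι) : Matrix ι ι ℝ :=
  α • (s⁻¹).permMatrix ℝ + β • (1 : Matrix ι ι ℝ) + γ • s.permMatrix ℝ

theorem cyclicBandMatrix_apply {ι : Type*} [DecidableEq ι] (α β γ : ℝ) (s : Perm ι) (i j : ι) :
    cyclicBandMatrix α β γ s i j = α * (if s j = i then 1 else 0) + β * (if i = j then 1 else 0) +
      γ * (if s i = j then 1 else 0) := by
  simp only [cyclicBandMatrix, Equiv.Perm.permMatrix, Matrix.add_apply, Matrix.smul_apply,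
    smul_eq_mul, PEquiv.toMatrix_apply, Equiv.toPEquiv_apply, Option.mem_some_iff, Matrix.one_apply,
    Perm.inv_eq_iff_eq, eq_comm (a := i) (b := s j)]

theorem cyclicBandMatrix_permCongr {ι κ : Type*} [DecidableEq ι] [DecidableEq κ] (α β γ : ℝ)
    (e : ι ≃ κ) (s : Perm ι) :
    (cyclicBandMatrix α β γ (e.permCongr s)).submatrix e e = cyclicBandMatrix α β γ s := by
  ext i j
  simp [cyclicBandMatrix_apply]

theorem cyclicBandMatrix_sumCongr {ι κ : Type*} [DecidableEq ι] [DecidableEq κ] (α β γ : ℝ)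
    (s : Perm ι) (t : Perm κ) :
    cyclicBandMatrix α β γ (Equiv.sumCongr s t) =
      fromBlocks (cyclicBandMatrix α β γ s) 0 0 (cyclicBandMatrix α β γ t) := by
  ext (i | i) (j | j) <;> simp [cyclicBandMatrix_apply]

theorem finRotate_hat (m : ℕ) (x : Fin (m + 3)) :
    finRotate (m + 3) x ≠ x ∧ finRotate (m + 3) (finRotate (m + 3) x) ≠ x := by
  have := x.2
  simp only [ne_eq, Fin.ext_iff, coe_finRotate]
  simp only [Fin.val_last]
  grind

theorem cyclicBandMatrix_finRotate (α β γ : ℝ) (m : ℕ) :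
    cyclicBandMatrix α β γ (finRotate (m + 3)) = circulantTridiagonal α β γ m := by
  ext i j
  have := i.2
  have := j.2
  simp only [cyclicBandMatrix_apply, circulantTridiagonal, of_apply, Fin.ext_iff, coe_finRotate,
    Fin.val_last]
  grind

theorem permanent_cyclicBandMatrix_conj {ι : Type*} [Fintype ι] [DecidableEq ι] (α β γ : ℝ)
    {s t : Perm ι} (h : s.cycleType = t.cycleType) :
    (cyclicBandMatrix α β γ s).permanent = (cyclicBandMatrix α β γ t).permanent := by
  obtain ⟨e, rfl⟩ := isConj_iff.1 (Perm.isConj_iff_cycleType_eq.2 h)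
  rw [← cyclicBandMatrix_permCongr α β γ e s, permanent_submatrix_equiv_self]
  congr 2

theorem eq_permanent_circulantTridiagonal {α β γ : ℝ} {a : ℕ → ℝ}
    (ha3 : a 3 = α ^ 3 + β ^ 3 + γ ^ 3 + 3 * α * β * γ)
    (ha4 : a 4 = α ^ 4 + β ^ 4 + γ ^ 4 + 4 * α * β ^ 2 * γ + 2 * α ^ 2 * γ ^ 2)
    (ha : ∀ m : ℕ, 5 ≤ m → a m = β * a (m - 1) + α * γ * a (m - 2) +
      α ^ (m - 1) * (α - β - γ) + γ ^ (m - 1) * (γ - β - α)) (m : ℕ) :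
    a (m + 3) = (circulantTridiagonal α β γ m).permanent := by
  induction m using Nat.twoStepInduction with
  | zero =>
    simp only [permanent_circulantTridiagonal, permanent_tridiagonal_add_two _ _ _ 0, Nat.reduceAdd,
      permanent_tridiagonal_zero, permanent_tridiagonal_one, ha3]
    ring
  | one =>
    simp only [permanent_circulantTridiagonal, Nat.reduceAdd,
      permanent_tridiagonal_add_two _ _ _ 1, permanent_tridiagonal_add_two _ _ _ 0,
      permanent_tridiagonal_zero, permanent_tridiagonal_one, ha4]
    ring
  | more m ih₀ ih₁ =>
    rw [ha _ (by omega), show m + 2 + 3 - 1 = m + 1 + 3 by omega,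
      show m + 2 + 3 - 2 = m + 3 by omega, ih₀, ih₁]
    simp only [permanent_circulantTridiagonal]
    rw [permanent_tridiagonal_add_two _ _ _ (m + 2), permanent_tridiagonal_add_two _ _ _ (m + 1)]
    ring

theorem exists_perm_permanent_cyclicBandMatrix {α β γ : ℝ} {a : ℕ → ℝ}
    (ha : ∀ m, a (m + 3) = (circulantTridiagonal α β γ m).permanent) (L : Multiset ℕ)
    (hL : ∀ p ∈ L, 3 ≤ p) :
    ∃ t : Perm (Fin L.sum), (∀ x, t x ≠ x ∧ t (t x) ≠ x) ∧ t.cycleType = L ∧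
      (cyclicBandMatrix α β γ t).permanent = (L.map a).prod := by
  induction L using Multiset.induction_on with
  | empty =>
    have : IsEmpty (Fin (0 : Multiset ℕ).sum) := Fin.isEmpty
    exact ⟨1, isEmptyElim, Perm.cycleType_one, permanent_isEmpty⟩
  | cons p L ih =>
    obtain ⟨t, ht, hc, hp⟩ := ih fun q hq => hL q (Multiset.mem_cons_of_mem hq)
    obtain ⟨m, rfl⟩ := Nat.exists_eq_add_of_le' (hL p (Multiset.mem_cons_self p L))
    let e : Fin (m + 3) ⊕ Fin L.sum ≃ Fin ((m + 3) ::ₘ L).sum :=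
      finSumFinEquiv.trans (finCongr (Multiset.sum_cons _ _).symm)
    refine ⟨e.permCongr (Equiv.sumCongr (finRotate (m + 3)) t), fun x => ?_, ?_, ?_⟩
    · obtain ⟨y, rfl⟩ := e.surjective x
      rcases y with y | y
      · simpa using finRotate_hat m y
      · simpa using ht y
    · rw [Perm.cycleType_permCongr, Perm.cycleType_sumCongr, hc, cycleType_finRotate,
        Multiset.singleton_add]
    · rw [← permanent_submatrix_equiv_self e, cyclicBandMatrix_permCongr,
        cyclicBandMatrix_sumCongr, permanent_fromBlocks_zero_zero, hp, cyclicBandMatrix_finRotate,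
        ← ha, Multiset.map_cons, Multiset.prod_cons]


theorem stmt_1 (α β γ : ℝ) (n : ℕ) (hn : 3 ≤ n) (a : ℕ → ℝ)
    (ha3 : a 3 = α ^ 3 + β ^ 3 + γ ^ 3 + 3 * α * β * γ)
    (ha4 : a 4 = α ^ 4 + β ^ 4 + γ ^ 4 + 4 * α * β ^ 2 * γ + 2 * α ^ 2 * γ ^ 2)
    (ha : ∀ m : ℕ, 5 ≤ m → a m = β * a (m - 1) + α * γ * a (m - 2) +
      α ^ (m - 1) * (α - β - γ) + γ ^ (m - 1) * (γ - β - α)) :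
    {x : ℝ | ∃ A ∈ LambdaHat n α β γ, A.permanent = x} =
      {x : ℝ | ∃ L : Multiset ℕ, (∀ p ∈ L, 3 ≤ p) ∧ L.sum = n ∧ (L.map a).prod = x} := by
  have ha' := eq_permanent_circulantTridiagonal ha3 ha4 ha
  ext x
  constructor
  · rintro ⟨_, ⟨s, hs, rfl⟩, rfl⟩
    have hL : ∀ p ∈ s.cycleType, 3 ≤ p := fun p =>
      Perm.three_le_of_mem_cycleType fun x _ => (hs x).2
    have hsum : s.cycleType.sum = n := by
      simpa using Perm.sum_cycleType_of_forall_ne fun x => (hs x).1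
    refine ⟨s.cycleType, hL, hsum, ?_⟩
    obtain ⟨t, -, hc, hp⟩ := exists_perm_permanent_cyclicBandMatrix ha' s.cycleType hL
    rw [← hp, ← cyclicBandMatrix_permCongr α β γ (finCongr hsum) t, permanent_submatrix_equiv_self]
    exact permanent_cyclicBandMatrix_conj α β γ (by rw [Perm.cycleType_permCongr, hc])
  · rintro ⟨L, hL, rfl, rfl⟩
    obtain ⟨t, ht, -, hp⟩ := exists_perm_permanent_cyclicBandMatrix ha' L hL
    exact ⟨_, ⟨t, ht, rfl⟩, hp⟩
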